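/- Let t ≥ 0 be an integer and let X be a database of size N in ℝ^d. For every database X_t of size N with H(X,X_t) = t and every database X_t' of size N with H(X_t,X_t') = 1, |q_count(X_t,k,r) − q_count(X_t',k,r)| ≤ sup_{x ∈ ℝ^d} max( C^{(t)}(X,x,k,r), C^{(t)}(X,x,k−1,r) ) + t + 1. (Upper bound on the t-step local sensitivity LS^{(t)} of the outlier-count query.) -/

import Mathlib

open Finset
open scoped Classical

noncomputable section

/-- A point of `ℝ^d`. -/
abbrev Pt (d : ℕ) := EuclideanSpace ℝ (Fin d)

/-- Hamming distance between two databases of size `N`: the number of differing records. -/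
def hamming {N d : ℕ} (X X' : Fin N → Pt d) : ℕ :=
  (univ.filter fun i => X i ≠ X' i).card

/-- The degree of record `i` in `X`: the number of other records within distance `r`. -/
def deg {N d : ℕ} (X : Fin N → Pt d) (r : ℝ) (i : Fin N) : ℕ :=
  (univ.filter fun j => j ≠ i ∧ ‖X j - X i‖ ≤ r).card

/-- The number of outlier records: records with fewer than `k` neighbors within radius `r`. -/
def qCount {N d : ℕ} (X : Fin N → Pt d) (k : ℕ) (r : ℝ) : ℕ :=
  (univ.filter fun i => deg X r i < k).card

/-- `V(X,m,r)`: the set of record indices of degree exactly `m` (empty for `m < 0`). -/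
def Vset {N d : ℕ} (X : Fin N → Pt d) (r : ℝ) (m : ℤ) : Finset (Fin N) :=
  univ.filter fun i => (deg X r i : ℤ) = m

/-- `CV(X,x,m,r)`: the set of degree-`m` record indices within distance `r` of `x`
(empty for `m < 0`). -/
def CV {N d : ℕ} (X : Fin N → Pt d) (x : Pt d) (m : ℤ) (r : ℝ) : Finset (Fin N) :=
  (Vset X r m).filter fun i => ‖X i - x‖ ≤ r

/-- The union `⋃_{j ≥ 0, |j−m| ≤ t} CV(X,x,j,r)` (terms with `j < 0` are empty). -/
def CVUnion {N d : ℕ} (X : Fin N → Pt d) (x : Pt d) (m : ℤ) (t : ℕ) (r : ℝ) :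
    Finset (Fin N) :=
  (Finset.Icc (m - t) (m + t)).biUnion fun j => CV X x j r

/-- `C^{(t)}(X,x,m,r) = |⋃_{j ≥ 0, |j−m| ≤ t} CV(X,x,j,r)|`. -/
def Ct {N d : ℕ} (X : Fin N → Pt d) (x : Pt d) (m : ℤ) (t : ℕ) (r : ℝ) : ℕ :=
  (CVUnion X x m t r).card

/-!
Replacing `t` records changes the degree of every other record by at most `t`, so a record of
degree `m` in `X_t` is either replaced or has degree between `m - t` and `m + t` in `X`.
When a single record is replaced, degrees move by at most one: an unreplaced record that stops
being an outlier goes from degree `k - 1` to degree `k`, and its new neighbor is the replaced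
record. All such records therefore lie within distance `r` of one point, the new position of the
replaced record. The value `k - 1` accounts for outliers lost on passing from `X_t` to `X_t'`, and
`k` for outliers gained, that is, lost on passing from `X_t'` to `X_t`.
-/

section

variable {N d : ℕ}

/-- The set of indices at which two databases differ; its cardinality is their Hamming distance. -/
def changed (X Y : Fin N → Pt d) : Finset (Fin N) :=
  univ.filter fun i => X i ≠ Y i

/-- The set of records that are outliers of `Y` but not of `Z`; its cardinality bounds the excess
of the outlier count of `Y` over that of `Z`. -/
def lostOutliers (Y Z : Fin N → Pt d) (k : ℕ) (r : ℝ) : Finset (Fin N) :=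
  univ.filter fun i => deg Y r i < k ∧ k ≤ deg Z r i

theorem mem_changed {X Y : Fin N → Pt d} {i : Fin N} : i ∈ changed X Y ↔ X i ≠ Y i := by
  simp [changed]

theorem card_changed (X Y : Fin N → Pt d) : (changed X Y).card = hamming X Y :=
  rfl

theorem hamming_comm (X Y : Fin N → Pt d) : hamming X Y = hamming Y X := by
  simp only [hamming, ne_comm]

theorem mem_lostOutliers {Y Z : Fin N → Pt d} {k : ℕ} {r : ℝ} {i : Fin N} :
    i ∈ lostOutliers Y Z k r ↔ deg Y r i < k ∧ k ≤ deg Z r i := by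
  simp [lostOutliers]

theorem mem_CV {X : Fin N → Pt d} {x : Pt d} {m : ℤ} {r : ℝ} {i : Fin N} :
    i ∈ CV X x m r ↔ (deg X r i : ℤ) = m ∧ ‖X i - x‖ ≤ r := by
  simp [CV, Vset]

theorem mem_CVUnion {X : Fin N → Pt d} {x : Pt d} {m : ℤ} {t : ℕ} {r : ℝ} {i : Fin N} :
    i ∈ CVUnion X x m t r ↔ |(deg X r i : ℤ) - m| ≤ t ∧ ‖X i - x‖ ≤ r := by
  simp only [CVUnion, mem_biUnion, mem_Icc, mem_CV, ← and_assoc, exists_and_right,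
    exists_eq_right', abs_sub_le_iff]
  grind

theorem deg_le_deg_add_hamming {X Y : Fin N → Pt d} {i : Fin N} (hi : X i = Y i) (r : ℝ) :
    deg X r i ≤ deg Y r i + hamming X Y := by
  refine (card_le_card fun j hj => ?_).trans (card_union_le _ _)
  simp only [mem_union, mem_filter, mem_univ, true_and] at hj ⊢
  by_cases hXY : X j = Y j
  · exact Or.inl (by rwa [← hXY, ← hi])
  · exact Or.inr hXY

theorem abs_deg_sub_deg_le_hamming {X Y : Fin N → Pt d} {i : Fin N} (hi : X i = Y i) (r : ℝ) :
    |(deg X r i : ℤ) - deg Y r i| ≤ hamming X Y := by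
  have hXY := deg_le_deg_add_hamming hi r
  have hYX := deg_le_deg_add_hamming hi.symm r
  rw [hamming_comm Y X] at hYX
  rw [abs_sub_le_iff]
  omega

theorem exists_mem_changed_norm_sub_le_of_deg_lt {Y Z : Fin N → Pt d} {r : ℝ} {i : Fin N}
    (hi : Y i = Z i) (hdeg : deg Y r i < deg Z r i) :
    ∃ j ∈ changed Y Z, ‖Z j - Z i‖ ≤ r := by
  by_contra! hfar
  refine hdeg.not_ge (card_le_card fun j hj => ?_)
  simp only [mem_filter, mem_univ, true_and] at hj ⊢
  have hj_eq : Y j = Z j := by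
    by_contra hne
    exact (hfar j (mem_changed.mpr hne)).not_ge hj.2
  rwa [hj_eq, hi]

theorem CV_subset_CVUnion_union_changed (X W : Fin N → Pt d) (x : Pt d) (m : ℤ) (r : ℝ) :
    CV W x m r ⊆ CVUnion X x m (hamming X W) r ∪ changed X W := by
  intro i hi
  obtain ⟨rfl, hx⟩ := mem_CV.mp hi
  by_cases hXW : X i = W i
  · exact mem_union_left _ (mem_CVUnion.mpr ⟨abs_deg_sub_deg_le_hamming hXW r, hXW ▸ hx⟩)
  · exact mem_union_right _ (mem_changed.mpr hXW)

theorem card_CV_le_Ct_add_hamming (X W : Fin N → Pt d) (x : Pt d) (m : ℤ) (r : ℝ) :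
    (CV W x m r).card ≤ Ct X x m (hamming X W) r + hamming X W :=
  (card_le_card (CV_subset_CVUnion_union_changed X W x m r)).trans (card_union_le _ _)

theorem qCount_le_qCount_add_card_lostOutliers (Y Z : Fin N → Pt d) (k : ℕ) (r : ℝ) :
    qCount Y k r ≤ qCount Z k r + (lostOutliers Y Z k r).card := by
  refine (card_le_card fun i hi => ?_).trans (card_union_le _ _)
  simp only [mem_union, mem_lostOutliers, mem_filter, mem_univ, true_and] at hi ⊢
  omega

theorem exists_lostOutliers_sdiff_changed_subset {Y Z : Fin N → Pt d} (hYZ : hamming Y Z = 1)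
    (k : ℕ) (r : ℝ) :
    ∃ x, lostOutliers Y Z k r \ changed Y Z ⊆ CV Y x (k - 1) r ∩ CV Z x k r := by
  obtain ⟨i₀, hi₀⟩ : ∃ i₀, changed Y Z = {i₀} := card_eq_one.mp hYZ
  refine ⟨Z i₀, fun i hi => ?_⟩
  obtain ⟨hlost, hunchanged⟩ := mem_sdiff.mp hi
  obtain ⟨hY, hZ⟩ := mem_lostOutliers.mp hlost
  have hi_eq : Y i = Z i := not_not.mp (mt mem_changed.mpr hunchanged)
  have hstep := deg_le_deg_add_hamming hi_eq.symm r
  rw [hamming_comm, hYZ] at hstep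
  have hnear : ‖Z i - Z i₀‖ ≤ r := by
    obtain ⟨j, hj, hjr⟩ := exists_mem_changed_norm_sub_le_of_deg_lt hi_eq (hY.trans_le hZ)
    obtain rfl : j = i₀ := by rwa [hi₀, mem_singleton] at hj
    rwa [norm_sub_rev]
  exact mem_inter.mpr
    ⟨mem_CV.mpr ⟨by omega, hi_eq ▸ hnear⟩, mem_CV.mpr ⟨by omega, hnear⟩⟩

theorem exists_qCount_le_qCount_add_card_CV {Y Z : Fin N → Pt d} (hYZ : hamming Y Z = 1)
    (k : ℕ) (r : ℝ) :
    ∃ x, qCount Y k r ≤ qCount Z k r + (CV Y x (k - 1) r).card + 1 ∧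
      qCount Y k r ≤ qCount Z k r + (CV Z x k r).card + 1 := by
  obtain ⟨x, hx⟩ := exists_lostOutliers_sdiff_changed_subset hYZ k r
  have hq := qCount_le_qCount_add_card_lostOutliers Y Z k r
  have hlost : (lostOutliers Y Z k r).card ≤ (lostOutliers Y Z k r \ changed Y Z).card + 1 := by
    rw [← hYZ, ← card_changed]
    exact card_le_card_sdiff_add_card
  have hY := card_le_card (hx.trans inter_subset_left)
  have hZ := card_le_card (hx.trans inter_subset_right)
  exact ⟨x, by omega, by omega⟩

theorem Ct_le (X : Fin N → Pt d) (x : Pt d) (m : ℤ) (t : ℕ) (r : ℝ) : Ct X x m t r ≤ N :=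
  card_finset_fin_le _

theorem max_Ct_le_sSup (X : Fin N → Pt d) (x : Pt d) (m m' : ℤ) (t : ℕ) (r : ℝ) :
    max (Ct X x m t r) (Ct X x m' t r) ≤
      sSup {n : ℕ | ∃ y : Pt d, n = max (Ct X y m t r) (Ct X y m' t r)} := by
  refine le_csSup ⟨N, ?_⟩ ⟨x, rfl⟩
  rintro _ ⟨y, rfl⟩
  exact max_le (Ct_le X y m t r) (Ct_le X y m' t r)

end

/-- Upper bound on the `t`-step local sensitivity `LS^{(t)}` of the outlier-count query:
if `H(X,X_t) = t` and `H(X_t,X_t') = 1`, then the change in the outlier count is at most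
`sup_{x ∈ ℝ^d} max( C^{(t)}(X,x,k,r), C^{(t)}(X,x,k−1,r) ) + t + 1`. -/
theorem local_sensitivity_t_upper_bound
    (d N k t : ℕ) (hd : 1 ≤ d) (hk : 1 ≤ k) (r : ℝ) (hr : 0 < r)
    (X Xt Xt' : Fin N → Pt d) (hH : hamming X Xt = t) (hH' : hamming Xt Xt' = 1) :
    |(qCount Xt k r : ℤ) - (qCount Xt' k r : ℤ)| ≤
      ((sSup {n : ℕ | ∃ x : Pt d,
        n = max (Ct X x (k : ℤ) t r) (Ct X x ((k : ℤ) - 1) t r)} : ℕ) : ℤ) + t + 1 := by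
  subst hH
  obtain ⟨x, hx, -⟩ := exists_qCount_le_qCount_add_card_CV hH' k r
  obtain ⟨y, -, hy⟩ := exists_qCount_le_qCount_add_card_CV ((hamming_comm Xt' Xt).trans hH') k r
  have hCx := card_CV_le_Ct_add_hamming X Xt x (k - 1) r
  have hCy := card_CV_le_Ct_add_hamming X Xt y k r
  have hsup_x := (le_max_right _ _).trans (max_Ct_le_sSup X x k (k - 1) (hamming X Xt) r)
  have hsup_y := (le_max_left _ _).trans (max_Ct_le_sSup X y k (k - 1) (hamming X Xt) r)
  rw [abs_sub_le_iff]
  constructor <;> omega
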